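/- The limit distribution function F of the Calkin–Wilf tree satisfies F(x + n) = 1 − 2^(−n) + 2^(−n)·F(x) for every real x ≥ 0 and every natural number n; in particular 1 − F(x) = O(2^(−x)) as x → ∞. -/

import Mathlib

/-!
Every left child `x / (x + 1)` is smaller than `1`, while the right child `x + 1` exceeds `t + 1`
exactly when its parent `x` exceeds `t`. Hence, for `t ≥ 0`, as many entries exceed `t + 1` in one
generation as exceed `t` in the previous one, which is half as long: the tail `G = 1 - F` satisfies
`G (t + 1) = G t / 2`. Iterating this gives the formula for `F (x + n)`, and starting the iteration
at the fractional part of `x` gives the exponential decay.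
-/

open Filter

/-- The generations of the Calkin–Wilf tree: `CW 0 = [1/1]` is the first
generation, and each generation is obtained from the previous one by replacing
each entry `x` by `x/(x+1)` and `x+1`, in this order.  Thus the `n`-th
generation of the paper is `CW (n-1)`. -/
def CW : ℕ → List ℚ
  | 0 => [1]
  | n + 1 => (CW n).flatMap (fun x => [x / (x + 1), x + 1])

open scoped Classical in
/-- `Fcw n` is the distribution function of the `(n+1)`-st generation of the
Calkin–Wilf tree: `Fcw (n-1) x = F_n(x) = 2^(1-n) · #{j : x_j^(n) ≤ x}`. -/
noncomputable def Fcw (n : ℕ) (x : ℝ) : ℝ :=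
  ((CW n).countP (fun q => decide ((q : ℝ) ≤ x))) / 2 ^ n

theorem apply_add_natCast_of_apply_add_one {R M α : Type*} [Semiring R] [PartialOrder R]
    [IsOrderedRing R] [Monoid M] [MulAction M α] {G : R → α} {r : M}
    (hG : ∀ x, 0 ≤ x → G (x + 1) = r • G x) {x : R} (hx : 0 ≤ x) (n : ℕ) :
    G (x + n) = r ^ n • G x := by
  induction n with
  | zero => simp
  | succ n ih =>
    rw [Nat.cast_succ, ← add_assoc, hG _ (add_nonneg hx n.cast_nonneg), ih, smul_smul, pow_succ']

theorem pow_floor_le_rpow_div {r : ℝ} (hr₀ : 0 < r) (hr₁ : r ≤ 1) (x : ℝ) :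
    r ^ ⌊x⌋₊ ≤ r ^ x / r := by
  rw [← Real.rpow_sub_one hr₀.ne', ← Real.rpow_natCast]
  exact Real.rpow_le_rpow_of_exponent_ge hr₀ hr₁ (Nat.sub_one_lt_floor x).le

theorem norm_le_mul_rpow_of_apply_add_one {E : Type*} [SeminormedAddCommGroup E]
    [NormedSpace ℝ E] {G : ℝ → E} {r M : ℝ} (hr₀ : 0 < r) (hr₁ : r ≤ 1)
    (hG : ∀ x, 0 ≤ x → G (x + 1) = r • G x) (hM : ∀ x ∈ Set.Ico (0 : ℝ) 1, ‖G x‖ ≤ M)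
    {x : ℝ} (hx : 0 ≤ x) : ‖G x‖ ≤ M / r * r ^ x := by
  have hfract : Int.fract x ∈ Set.Ico (0 : ℝ) 1 := ⟨Int.fract_nonneg x, Int.fract_lt_one x⟩
  have hdecomp : Int.fract x + ⌊x⌋₊ = x := by
    rw [natCast_floor_eq_intCast_floor hx, Int.fract_add_floor]
  calc ‖G x‖ = ‖r ^ ⌊x⌋₊ • G (Int.fract x)‖ := by
        rw [← apply_add_natCast_of_apply_add_one hG hfract.1, hdecomp]
    _ = r ^ ⌊x⌋₊ * ‖G (Int.fract x)‖ := by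
        rw [norm_smul, Real.norm_of_nonneg (pow_nonneg hr₀.le _)]
    _ ≤ r ^ x / r * M :=
        mul_le_mul (pow_floor_le_rpow_div hr₀ hr₁ x) (hM _ hfract) (norm_nonneg _) (by positivity)
    _ = M / r * r ^ x := by ring

/-- The left and right child of `x` in the Calkin–Wilf tree, over an arbitrary division
semiring so that a generation can be moved to `ℝ` and compared with real thresholds. -/
def calkinWilfChildren {K : Type*} [DivisionSemiring K] (x : K) : List K :=
  [x / (x + 1), x + 1]

theorem map_calkinWilfChildren {K L : Type*} [DivisionSemiring K] [DivisionSemiring L]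
    (f : K →+* L) (x : K) :
    (calkinWilfChildren x).map f = calkinWilfChildren (f x) := by
  simp [calkinWilfChildren]

section LinearOrderedSemifield

variable {K : Type*} [Semifield K] [LinearOrder K] [IsStrictOrderedRing K]

theorem countP_add_one_lt_calkinWilfChildren {q x : K} (hq : 0 ≤ q) (hx : 0 ≤ x) :
    (calkinWilfChildren q).countP (x + 1 < ·) = if x < q then 1 else 0 := by
  have hleft : q / (q + 1) ≤ x + 1 :=
    (div_le_one_of_le₀ (le_add_of_nonneg_right zero_le_one) (by positivity)).trans
      (le_add_of_nonneg_left hx)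
  simp [calkinWilfChildren, List.countP_cons, hleft.not_gt]

theorem countP_add_one_lt_flatMap_calkinWilfChildren {l : List K} (hl : ∀ q ∈ l, 0 ≤ q) {x : K}
    (hx : 0 ≤ x) :
    (l.flatMap calkinWilfChildren).countP (x + 1 < ·) = l.countP (x < ·) := by
  induction l with
  | nil => rfl
  | cons q l ih =>
    obtain ⟨hq, hl⟩ := List.forall_mem_cons.1 hl
    rw [List.flatMap_cons, List.countP_append, ih hl,
      countP_add_one_lt_calkinWilfChildren hq hx, List.countP_cons, add_comm]
    simp only [decide_eq_true_eq]

end LinearOrderedSemifield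

theorem CW_succ (n : ℕ) : CW (n + 1) = (CW n).flatMap calkinWilfChildren := rfl

theorem pos_of_mem_CW {n : ℕ} {q : ℚ} (hq : q ∈ CW n) : 0 < q := by
  induction n generalizing q with
  | zero => simp_all [CW]
  | succ n ih =>
    obtain ⟨p, hp, hqp⟩ := List.mem_flatMap.1 hq
    have hp₀ := ih hp
    obtain rfl | rfl := List.mem_pair.1 hqp <;> positivity

theorem length_CW (n : ℕ) : (CW n).length = 2 ^ n := by
  induction n with
  | zero => rfl
  | succ n ih => simp [CW, List.length_flatMap, ih, pow_succ]

theorem map_cast_CW_succ (n : ℕ) :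
    (CW (n + 1)).map ((↑) : ℚ → ℝ) = ((CW n).map (↑)).flatMap calkinWilfChildren := by
  rw [CW_succ, List.map_flatMap, List.flatMap_map]
  exact congrArg (List.flatMap · (CW n)) (funext (map_calkinWilfChildren (Rat.castHom ℝ)))

theorem Fcw_eq_countP_map_cast_div (n : ℕ) (x : ℝ) :
    Fcw n x = ((CW n).map ((↑) : ℚ → ℝ)).countP (· ≤ x) / 2 ^ n := by
  -- In `Fcw`, the coercion to `ℝ` is elaborated as a monadic lift of the whole list `CW n`.
  simp [Fcw, List.map_eq_flatMap]

theorem one_sub_Fcw (n : ℕ) (x : ℝ) :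
    1 - Fcw n x = ((CW n).map ((↑) : ℚ → ℝ)).countP (x < ·) / 2 ^ n := by
  have hlength := ((CW n).map ((↑) : ℚ → ℝ)).length_eq_countP_add_countP (· ≤ x)
  simp only [List.length_map, length_CW, decide_eq_true_eq, not_le] at hlength
  rw [Fcw_eq_countP_map_cast_div, sub_eq_iff_eq_add', ← add_div, eq_div_iff (by positivity),
    one_mul]
  exact_mod_cast hlength

theorem one_sub_Fcw_succ_add_one (n : ℕ) {x : ℝ} (hx : 0 ≤ x) :
    1 - Fcw (n + 1) (x + 1) = 2⁻¹ * (1 - Fcw n x) := by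
  have hnonneg : ∀ q ∈ (CW n).map ((↑) : ℚ → ℝ), 0 ≤ q :=
    List.forall_mem_map.2 fun q hq ↦ Rat.cast_nonneg.2 (pos_of_mem_CW hq).le
  rw [one_sub_Fcw, one_sub_Fcw, map_cast_CW_succ,
    countP_add_one_lt_flatMap_calkinWilfChildren hnonneg hx, pow_succ']
  ring

theorem Fcw_mem_Icc (n : ℕ) (x : ℝ) : Fcw n x ∈ Set.Icc 0 1 := by
  constructor
  · rw [Fcw_eq_countP_map_cast_div]
    positivity
  · rw [← sub_nonneg, one_sub_Fcw]
    positivity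

theorem one_sub_eq_of_tendsto_Fcw_add_one {x a b : ℝ} (hx : 0 ≤ x)
    (ha : Tendsto (Fcw · x) atTop (nhds a)) (hb : Tendsto (Fcw · (x + 1)) atTop (nhds b)) :
    1 - b = 2⁻¹ * (1 - a) := by
  have hshift : Tendsto (fun n ↦ 1 - Fcw (n + 1) (x + 1)) atTop (nhds (1 - b)) :=
    ((tendsto_add_atTop_iff_nat 1).2 hb).const_sub 1
  simp only [one_sub_Fcw_succ_add_one _ hx] at hshift
  exact tendsto_nhds_unique hshift ((ha.const_sub 1).const_mul _)

theorem mem_Icc_of_tendsto_Fcw {x a : ℝ} (ha : Tendsto (Fcw · x) atTop (nhds a)) :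
    a ∈ Set.Icc 0 1 :=
  isClosed_Icc.mem_of_tendsto ha (.of_forall (Fcw_mem_Icc · x))

/-- The limit distribution function `F` of the Calkin–Wilf tree satisfies
`F(x + n) = 1 − 2^(−n) + 2^(−n)·F(x)` for all `x ≥ 0` and `n ∈ ℕ`; in
particular `1 − F(x) = O(2^(−x))` as `x → ∞`. -/
theorem calkin_wilf_limit_distribution_tail (F : ℝ → ℝ)
    (hF : ∀ x : ℝ, 0 ≤ x → Tendsto (fun n => Fcw n x) atTop (nhds (F x))) :
    (∀ x : ℝ, 0 ≤ x → ∀ n : ℕ,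
      F (x + n) = 1 - 2 ^ (-(n : ℤ)) + 2 ^ (-(n : ℤ)) * F x) ∧
    ∃ C : ℝ, 0 < C ∧ ∀ x : ℝ, 0 ≤ x → |1 - F x| ≤ C * (2 : ℝ) ^ (-x) := by
  have tail_add_one : ∀ x, 0 ≤ x → 1 - F (x + 1) = (2⁻¹ : ℝ) • (1 - F x) := fun x hx ↦
    one_sub_eq_of_tendsto_Fcw_add_one hx (hF x hx) (hF (x + 1) (by positivity))
  have tail_le_one : ∀ x ∈ Set.Ico (0 : ℝ) 1, ‖1 - F x‖ ≤ 1 := fun x hx ↦ by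
    obtain ⟨hF₀, hF₁⟩ := mem_Icc_of_tendsto_Fcw (hF x hx.1)
    rw [Real.norm_of_nonneg (by linarith)]
    linarith
  refine ⟨fun x hx n ↦ ?_, 2, two_pos, fun x hx ↦ ?_⟩
  · have htail : 1 - F (x + n) = 2⁻¹ ^ n * (1 - F x) :=
      apply_add_natCast_of_apply_add_one (G := fun x ↦ 1 - F x) tail_add_one hx n
    rw [zpow_neg, zpow_natCast, ← inv_pow]
    linarith
  · simpa [Real.inv_rpow, Real.rpow_neg] using
      norm_le_mul_rpow_of_apply_add_one (G := fun x ↦ 1 - F x) (by norm_num) (by norm_num)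
        tail_add_one tail_le_one hx
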